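/- Let B_p(x,y) = ∫_{ℝ^d} e^{i⟨x−y,ξ⟩} b_p(ξ) dξ be the B-spline kernel on ℝ^d of even order p, where b_p(ξ) = (2π)^{−d} ∏_{j=1}^d (sin(ξ_j/2)/(ξ_j/2))^p, and let A_τ(x,y) = ∑_{j=1}^d exp(−|x_j−y_j|²/τ) be the ANOVA kernel with parameter τ > 0. Then: (a) for even integers p < q, B_p − B_q is a positive semidefinite kernel on ℝ^d, 1 is the least constant λ ≥ 0 for which λB_p − B_q is a positive semidefinite kernel, and there is no λ ≥ 0 for which λB_q − B_p is a positive semidefinite kernel; (b) for 0 < τ₁ < τ₂, √(τ₂/τ₁) A_{τ₁} − A_{τ₂} is a positive semidefinite kernel on ℝ^d, √(τ₂/τ₁) is the least constant λ ≥ 0 for which λA_{τ₁} − A_{τ₂} is a positive semidefinite kernel, and there is no λ ≥ 0 for which λA_{τ₂} − A_{τ₁} is a positive semidefinite kernel. -/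

import Mathlib

open MeasureTheory
open scoped ComplexOrder

/-- A function `K : X × X → ℂ` is a positive semidefinite kernel if every finite
quadratic form `∑ j, ∑ k, c j * conj (c k) * K (x j) (x k)` is a nonnegative real number. -/
def IsPSDKernel {X : Type*} (K : X → X → ℂ) : Prop :=
  ∀ (n : ℕ) (x : Fin n → X) (c : Fin n → ℂ),
    0 ≤ ∑ j, ∑ k, c j * (starRingEnd ℂ) (c k) * K (x j) (x k)

/-- The Fourier density `b_p(ξ) = (2π)^{−d} ∏_j (sin(ξ_j/2)/(ξ_j/2))^p` of the
B-spline kernel of order `p`. -/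
noncomputable def bsplineDensity (d p : ℕ) (ξ : EuclideanSpace ℝ (Fin d)) : ℝ :=
  (2 * Real.pi) ^ (-(d : ℤ)) *
    ∏ j, (if ξ j = 0 then 1 else Real.sin (ξ j / 2) / (ξ j / 2)) ^ p

/-- The B-spline kernel `B_p(x,y) = ∫_{ℝ^d} e^{i⟨x−y,ξ⟩} b_p(ξ) dξ` on `ℝ^d`. -/
noncomputable def bsplineK (d p : ℕ) (x y : EuclideanSpace ℝ (Fin d)) : ℂ :=
  ∫ ξ, Complex.exp (Complex.I * ((inner ℝ (x - y) ξ : ℝ) : ℂ)) * (bsplineDensity d p ξ : ℂ)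

/-- The ANOVA kernel `A_τ(x,y) = ∑_{j=1}^d exp(−|x_j−y_j|²/τ)` on `ℝ^d`. -/
noncomputable def anovaK (d : ℕ) (τ : ℝ) (x y : EuclideanSpace ℝ (Fin d)) : ℂ :=
  ((∑ j, Real.exp (-|x j - y j| ^ 2 / τ) : ℝ) : ℂ)

/-!
A difference `charFun μ (x - y) - charFun ν (x - y)` of characteristic functions of finite measures
is a positive semidefinite kernel exactly when `ν ≤ μ`. One direction is Bochner's easy half. For
the other, integrating the kernel against `g(x) conj g(y)` for Schwartz `g` gives
`∫ |ĝ|² dν ≤ ∫ |ĝ|² dμ`, and the functions `ĝ` are dense in `L²(μ + ν)`.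

Both claims thus become comparisons of spectral measures. For B-splines these are
`λ b_p ≥ b_q` pointwise: `|sinc| ≤ 1` with equality at the origin makes `1` the best constant, and
`sinc π = 0` excludes the reverse order. The spectral measure of the ANOVA kernel is a copy of the
Gaussian with variance `2 / τ` on each coordinate axis, so one compares Gaussian densities: the
ratio is extremal at the origin and degenerates at infinity.
-/

open Filter Topology ProbabilityTheory ComplexConjugate

section PSDKernel

variable {X : Type*} {K : X → X → ℂ}

lemma IsPSDKernel.weight (hK : IsPSDKernel K) (w : X → ℂ) :
    IsPSDKernel fun x y => w x * conj (w y) * K x y := by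
  intro n x c
  refine (hK n x fun j => c j * w (x j)).trans_eq
    (Finset.sum_congr rfl fun j _ => Finset.sum_congr rfl fun k _ => ?_)
  rw [map_mul]
  ring

lemma isPSDKernel_mul_conj (w : X → ℂ) : IsPSDKernel fun x y => w x * conj (w y) := by
  intro n x c
  have hsq : ∑ j, ∑ k, c j * conj (c k) * (w (x j) * conj (w (x k))) =
      (∑ j, c j * w (x j)) * star (∑ j, c j * w (x j)) := by
    rw [star_sum, Finset.sum_mul_sum]
    refine Finset.sum_congr rfl fun j _ => Finset.sum_congr rfl fun k _ => ?_
    rw [Complex.star_def, map_mul]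
    ring
  rw [hsq]
  exact mul_star_self_nonneg _

lemma IsPSDKernel.integral {Ω : Type*} [MeasurableSpace Ω] {μ : Measure Ω} {K : Ω → X → X → ℂ}
    (hK : ∀ ω, IsPSDKernel (K ω)) (hint : ∀ x y, Integrable (K · x y) μ) :
    IsPSDKernel fun x y => ∫ ω, K ω x y ∂μ := by
  intro n x c
  have hterm (j k : Fin n) : Integrable (fun ω => c j * conj (c k) * K ω (x j) (x k)) μ :=
    (hint _ _).const_mul _
  have hswap : ∑ j, ∑ k, c j * conj (c k) * ∫ ω, K ω (x j) (x k) ∂μ =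
      ∫ ω, ∑ j, ∑ k, c j * conj (c k) * K ω (x j) (x k) ∂μ := by
    rw [integral_finsetSum _ fun j _ => integrable_finsetSum _ fun k _ => hterm j k]
    refine Finset.sum_congr rfl fun j _ => ?_
    rw [integral_finsetSum _ fun k _ => hterm j k]
    exact Finset.sum_congr rfl fun k _ => (integral_const_mul _ _).symm
  rw [hswap]
  exact integral_nonneg fun ω => hK ω n x c

lemma measurePreserving_eval_prodMk_pi {ι : Type*} [Fintype ι] [MeasurableSpace X] (P : Measure X)
    [IsProbabilityMeasure P] {j k : ι} (hjk : j ≠ k) :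
    MeasurePreserving (fun x : ι → X => (x j, x k)) (Measure.pi fun _ => P) (P.prod P) := by
  refine ⟨by fun_prop, ?_⟩
  have hindep := (iIndepFun_pi (μ := fun _ : ι => P) (X := fun _ => id)
    fun _ => aemeasurable_id).indepFun hjk
  have hmap := hindep.map_prod_eq_prod_map_map (measurable_pi_apply j).aemeasurable
    (measurable_pi_apply k).aemeasurable
  simpa only [id, (measurePreserving_eval (fun _ : ι => P) _).map_eq] using hmap

variable [MeasurableSpace X]

/- Average the quadratic form with unit coefficients over `n` independent random points: the `n`
diagonal terms are negligible against the `n * (n - 1)` off-diagonal ones. -/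
lemma IsPSDKernel.integral_prod_nonneg {P : Measure X} [IsProbabilityMeasure P]
    (hK : IsPSDKernel K) (hdiag : Integrable (fun x => K x x) P)
    (hint : Integrable (Function.uncurry K) (P.prod P)) :
    0 ≤ ∫ z, K z.1 z.2 ∂P.prod P := by
  set D := ∫ x, K x x ∂P
  set I := ∫ z, K z.1 z.2 ∂P.prod P with hI
  have hterm {n : ℕ} (j k : Fin n) :
      Integrable (fun x : Fin n → X => K (x j) (x k)) (Measure.pi fun _ => P) ∧
        ∫ x, K (x j) (x k) ∂Measure.pi (fun _ : Fin n => P) = if j = k then D else I := by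
    obtain rfl | hjk := eq_or_ne j k
    · have hpres := measurePreserving_eval (fun _ : Fin n => P) j
      refine ⟨hpres.integrable_comp_of_integrable hdiag, ?_⟩
      rw [if_pos rfl]
      exact integral_comp_eval (μ := fun _ : Fin n => P) (f := fun x => K x x) hdiag.1
    · have hpres := measurePreserving_eval_prodMk_pi P hjk
      refine ⟨hpres.integrable_comp_of_integrable hint, ?_⟩
      rw [if_neg hjk, hI, ← hpres.map_eq, integral_map hpres.measurable.aemeasurable]
      exact hpres.map_eq.symm ▸ hint.aestronglyMeasurable
  have hrow {n : ℕ} (j : Fin (n + 1)) : ∑ k, (if j = k then D else I) = D + n * I := by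
    rw [← Finset.add_sum_erase _ _ (Finset.mem_univ j), if_pos rfl,
      Finset.sum_congr rfl fun k hk => if_neg (Finset.ne_of_mem_erase hk).symm]
    simp
  have hmean (n : ℕ) : 0 ≤ D + n * I := by
    have h : 0 ≤ ∫ x, ∑ j, ∑ k, K (x j) (x k) ∂Measure.pi (fun _ : Fin (n + 1) => P) :=
      integral_nonneg fun x => by simpa using hK (n + 1) x fun _ => 1
    rw [integral_finsetSum _ fun j _ => integrable_finsetSum _ fun k _ => (hterm j k).1] at h
    simp_rw [integral_finsetSum _ fun k _ => (hterm _ k).1, (hterm _ _).2, hrow] at h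
    rw [Finset.sum_const, Finset.card_univ, Fintype.card_fin, nsmul_eq_mul] at h
    have hn : (0 : ℂ) < (n + 1 : ℕ) := by exact_mod_cast n.succ_pos
    simpa only [inv_mul_cancel_left₀ hn.ne'] using mul_nonneg (inv_nonneg.2 hn.le) h
  have hlim : Tendsto (fun n : ℕ => (n : ℂ)⁻¹ * D + I) atTop (𝓝 I) := by
    simpa using (tendsto_inv_atTop_nhds_zero_nat (𝕜 := ℂ)).mul_const D |>.add_const I
  refine ge_of_tendsto hlim ?_
  filter_upwards [eventually_gt_atTop 0] with n hn
  have hn' : (0 : ℂ) < n := by exact_mod_cast hn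
  have h := mul_nonneg (inv_nonneg.2 hn'.le) (hmean n)
  rwa [mul_add, inv_mul_cancel_left₀ hn'.ne'] at h

lemma IsPSDKernel.integral_integral_nonneg (hK : IsPSDKernel K)
    (hKm : Measurable (Function.uncurry K)) {C : ℝ} (hKC : ∀ x y, ‖K x y‖ ≤ C)
    (m : Measure X) [IsFiniteMeasure m] : 0 ≤ ∫ x, ∫ y, K x y ∂m ∂m := by
  obtain rfl | hm := eq_zero_or_neZero m
  · simp
  set a := m Set.univ
  let P : Measure X := a⁻¹ • m
  have hint : Integrable (Function.uncurry K) (P.prod P) :=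
    Integrable.of_bound hKm.aestronglyMeasurable C (ae_of_all _ fun z => hKC z.1 z.2)
  have hdiag : Integrable (fun x => K x x) P :=
    Integrable.of_bound (hKm.comp (measurable_id.prodMk measurable_id)).aestronglyMeasurable C
      (ae_of_all _ fun x => hKC x x)
  have hP := hK.integral_prod_nonneg hdiag hint
  have hma : m = a • P := by
    rw [smul_smul, ENNReal.mul_inv_cancel (NeZero.ne _) (measure_ne_top m _), one_smul]
  rw [hma]
  simp only [integral_smul_measure, integral_smul]
  rw [integral_integral hint]
  exact smul_nonneg ENNReal.toReal_nonneg (smul_nonneg ENNReal.toReal_nonneg hP)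

/- Reduction to finite measures: give `m` the density `‖c‖` and weight the points by the phase
of `c`. -/
lemma IsPSDKernel.integral_integral_weight_nonneg (hK : IsPSDKernel K)
    (hKm : Measurable (Function.uncurry K)) {C : ℝ} (hKC : ∀ x y, ‖K x y‖ ≤ C) {m : Measure X}
    {c : X → ℂ} (hcm : Measurable c) (hc : Integrable c m) :
    0 ≤ ∫ x, ∫ y, c x * conj (c y) * K x y ∂m ∂m := by
  let m' := m.withDensity fun x => ‖c x‖ₑ
  have : IsFiniteMeasure m' := isFiniteMeasure_withDensity hc.2.ne
  let phase : X → ℂ := fun x => c x / ‖c x‖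
  have hphase (x : X) : ‖phase x‖ ≤ 1 := by
    simpa [phase] using div_self_le_one ‖c x‖
  have hmul_phase (x : X) : ‖c x‖ * phase x = c x := by
    obtain hx | hx := eq_or_ne (c x) 0
    · simp [hx]
    · exact mul_div_cancel₀ _ (by simpa using hx)
  have hwd (g : X → ℂ) : ∫ x, g x ∂m' = ∫ x, ‖c x‖ * g x ∂m :=
    integral_withDensity_eq_integral_smul hcm.nnnorm g
  have hbound (x y : X) : ‖phase x * conj (phase y) * K x y‖ ≤ C := by
    rw [norm_mul, norm_mul, RCLike.norm_conj]
    exact (mul_le_of_le_one_left (norm_nonneg _)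
      (mul_le_one₀ (hphase x) (norm_nonneg _) (hphase y))).trans (hKC x y)
  have hm' := (hK.weight phase).integral_integral_nonneg (by fun_prop) hbound m'
  simp only [hwd, ← integral_const_mul] at hm'
  refine hm'.trans_eq (integral_congr_ae <| ae_of_all _ fun x =>
    integral_congr_ae <| ae_of_all _ fun y => ?_)
  calc ‖c x‖ * (‖c y‖ * (phase x * conj (phase y) * K x y))
      = ‖c x‖ * phase x * conj (‖c y‖ * phase y) * K x y := by
        rw [map_mul, Complex.conj_ofReal]
        ring
    _ = c x * conj (c y) * K x y := by rw [hmul_phase, hmul_phase]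

end PSDKernel

section CharFun

variable {E : Type*} [NormedAddCommGroup E] [InnerProductSpace ℝ E] [MeasurableSpace E]

lemma charFun_sub_eq_integral_mul_conj (μ : Measure E) (x y : E) :
    charFun μ (x - y) = ∫ ξ, Complex.exp (inner ℝ ξ x * Complex.I) *
      conj (Complex.exp (inner ℝ ξ y * Complex.I)) ∂μ := by
  rw [charFun_apply]
  congr with ξ
  rw [← Complex.exp_conj, ← Complex.exp_add, map_mul, Complex.conj_ofReal, Complex.conj_I,
    inner_sub_right]
  push_cast
  ring_nf

variable [BorelSpace E] [SecondCountableTopology E]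

lemma integrable_exp_inner_mul (μ : Measure E) [IsFiniteMeasure μ] (x : E) :
    Integrable (fun ξ => Complex.exp (inner ℝ ξ x * Complex.I)) μ :=
  .of_bound (by fun_prop) 1 (ae_of_all _ fun _ => (Complex.norm_exp_ofReal_mul_I _).le)

lemma charFun_add_measure (μ ν : Measure E) [IsFiniteMeasure μ] [IsFiniteMeasure ν] (t : E) :
    charFun (μ + ν) t = charFun μ t + charFun ν t :=
  integral_add_measure (integrable_exp_inner_mul μ t) (integrable_exp_inner_mul ν t)

lemma isPSDKernel_charFun (μ : Measure E) [IsFiniteMeasure μ] :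
    IsPSDKernel fun x y => charFun μ (x - y) := by
  simp_rw [charFun_sub_eq_integral_mul_conj]
  refine .integral (fun ξ => isPSDKernel_mul_conj _) fun x y => ?_
  refine (integrable_exp_inner_mul μ x).mul_bdd (c := 1) (by fun_prop) (ae_of_all _ fun ξ => ?_)
  rw [RCLike.norm_conj, Complex.norm_exp_ofReal_mul_I]

lemma integral_integral_mul_charFun_sub (μ m : Measure E) [IsFiniteMeasure μ] [SFinite m]
    {c : E → ℂ} (hc : Integrable c m) :
    ∫ x, ∫ y, c x * conj (c y) * charFun μ (x - y) ∂m ∂m =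
      ((∫ ξ, ‖∫ x, c x * Complex.exp (inner ℝ ξ x * Complex.I) ∂m‖ ^ 2 ∂μ : ℝ) : ℂ) := by
  let F : E → E → ℂ := fun ξ x => c x * Complex.exp (inner ℝ ξ x * Complex.I)
  have hpair : Integrable (fun p : E × E × E => F p.1 p.2.1 * conj (F p.1 p.2.2))
      (μ.prod (m.prod m)) := by
    have hcc : Integrable (fun p : E × E × E => c p.2.1 * conj (c p.2.2)) (μ.prod (m.prod m)) :=
      (hc.mul_prod (Complex.conjCLE.integrable_comp_iff.2 hc)).comp_snd μ
    let e : E → E → ℂ := fun ξ x => Complex.exp (inner ℝ ξ x * Complex.I)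
    have he (ξ x : E) : ‖e ξ x‖ = 1 := Complex.norm_exp_ofReal_mul_I _
    refine (hcc.bdd_mul (f := fun p => e p.1 p.2.1 * conj (e p.1 p.2.2)) (c := 1) (by fun_prop)
      (ae_of_all _ fun p => by simp [he])).congr (ae_of_all _ fun p => ?_)
    simp only [F, e, map_mul]
    ring
  calc ∫ x, ∫ y, c x * conj (c y) * charFun μ (x - y) ∂m ∂m
      = ∫ x, ∫ y, ∫ ξ, F ξ x * conj (F ξ y) ∂μ ∂m ∂m := by
        simp_rw [charFun_sub_eq_integral_mul_conj, ← integral_const_mul, F, map_mul]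
        congr! 6
        ring
    _ = ∫ z, ∫ ξ, F ξ z.1 * conj (F ξ z.2) ∂μ ∂m.prod m :=
        integral_integral (f := fun x y => ∫ ξ, F ξ x * conj (F ξ y) ∂μ) hpair.integral_prod_right
    _ = ∫ ξ, ∫ z, F ξ z.1 * conj (F ξ z.2) ∂m.prod m ∂μ :=
        (integral_integral_swap (f := fun ξ (z : E × E) => F ξ z.1 * conj (F ξ z.2)) hpair).symm
    _ = ∫ ξ, ((‖∫ x, F ξ x ∂m‖ ^ 2 : ℝ) : ℂ) ∂μ := by
        congr with ξ
        rw [integral_prod_mul (F ξ) fun y => conj (F ξ y), integral_conj, Complex.mul_conj']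
        norm_cast
    _ = _ := integral_ofReal

lemma integral_sq_norm_le_of_isPSDKernel_charFun_sub {μ ν m : Measure E} [IsFiniteMeasure μ]
    [IsFiniteMeasure ν] [SFinite m]
    (h : IsPSDKernel fun x y => charFun μ (x - y) - charFun ν (x - y))
    {c : E → ℂ} (hcm : Measurable c) (hc : Integrable c m) :
    ∫ ξ, ‖∫ x, c x * Complex.exp (inner ℝ ξ x * Complex.I) ∂m‖ ^ 2 ∂ν ≤
      ∫ ξ, ‖∫ x, c x * Complex.exp (inner ℝ ξ x * Complex.I) ∂m‖ ^ 2 ∂μ := by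
  have hmeas (ρ : Measure E) [IsFiniteMeasure ρ] :
      Measurable fun z : E × E => charFun ρ (z.1 - z.2) :=
    measurable_charFun.comp (measurable_fst.sub measurable_snd)
  have hint (ρ : Measure E) [IsFiniteMeasure ρ] :
      Integrable (fun z : E × E => c z.1 * conj (c z.2) * charFun ρ (z.1 - z.2)) (m.prod m) :=
    (hc.mul_prod (Complex.conjCLE.integrable_comp_iff.2 hc)).mul_bdd (c := ρ.real Set.univ)
      (hmeas ρ).aestronglyMeasurable (ae_of_all _ fun z => norm_charFun_le _)
  have hnonneg := h.integral_integral_weight_nonneg ((hmeas μ).sub (hmeas ν))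
    (fun x y => (norm_sub_le _ _).trans (add_le_add (norm_charFun_le _) (norm_charFun_le _)))
    hcm hc
  simp only [mul_sub] at hnonneg
  rw [integral_integral_sub (hint μ) (hint ν), integral_integral_mul_charFun_sub μ m hc,
    integral_integral_mul_charFun_sub ν m hc] at hnonneg
  exact_mod_cast sub_nonneg.1 hnonneg

end CharFun

section Domination

variable {E : Type*} [NormedAddCommGroup E] [InnerProductSpace ℝ E] [FiniteDimensional ℝ E]
  [MeasurableSpace E] [BorelSpace E]

open scoped ContDiff FourierTransform

lemma exists_schwartzMap_integral_mul_exp_eq (h : SchwartzMap E ℂ) :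
    ∃ c : SchwartzMap E ℂ, ∀ ξ, ∫ x, c x * Complex.exp (inner ℝ ξ x * Complex.I) = h ξ := by
  have hpi : (2 * Real.pi : ℝ) ≠ 0 := by positivity
  let dilate : E ≃L[ℝ] E := ContinuousLinearEquiv.smulLeft (Units.mk0 (2 * Real.pi) hpi)
  let g : SchwartzMap E ℂ := SchwartzMap.compCLMOfContinuousLinearEquiv ℂ dilate h
  refine ⟨𝓕 g, fun ξ => ?_⟩
  calc ∫ x, 𝓕 g x * Complex.exp (inner ℝ ξ x * Complex.I)
      = 𝓕⁻ (𝓕 g) (dilate.symm ξ) := by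
        rw [SchwartzMap.fourierInv_coe, Real.fourierInv_eq']
        congr with x
        have hinner : 2 * Real.pi * inner ℝ x (dilate.symm ξ) = inner ℝ ξ x := by
          rw [← real_inner_smul_right, real_inner_comm x]
          exact congrArg (inner ℝ x) (dilate.apply_symm_apply ξ)
        rw [hinner, smul_eq_mul, mul_comm]
    _ = h ξ := by
        rw [FourierTransform.fourierInv_fourier_eq]
        exact congrArg h (dilate.apply_symm_apply ξ)

variable {μ ν : Measure E} [IsFiniteMeasure μ] [IsFiniteMeasure ν]

lemma eLpNorm_two_schwartzMap_le_of_isPSDKernel_charFun_sub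
    (hK : IsPSDKernel fun x y => charFun μ (x - y) - charFun ν (x - y)) (h : SchwartzMap E ℂ) :
    eLpNorm h 2 ν ≤ eLpNorm h 2 μ := by
  obtain ⟨c, hc⟩ := exists_schwartzMap_integral_mul_exp_eq h
  have hle := integral_sq_norm_le_of_isPSDKernel_charFun_sub hK c.continuous.measurable
    (c.integrable (μ := volume))
  simp only [hc] at hle
  rw [(h.memLp 2 ν).eLpNorm_eq_integral_rpow_norm two_ne_zero ENNReal.ofNat_ne_top,
    (h.memLp 2 μ).eLpNorm_eq_integral_rpow_norm two_ne_zero ENNReal.ofNat_ne_top]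
  simp only [ENNReal.toReal_ofNat, Real.rpow_ofNat]
  gcongr

lemma eLpNorm_two_le_of_isPSDKernel_charFun_sub
    (hK : IsPSDKernel fun x y => charFun μ (x - y) - charFun ν (x - y))
    {f : E → ℂ} (hf : MemLp f 2 (μ + ν)) : eLpNorm f 2 ν ≤ eLpNorm f 2 μ := by
  refine ENNReal.le_of_forall_pos_le_add fun ε hε _ => ?_
  obtain ⟨g, hg_supp, hg_smooth, hfg⟩ :=
    hf.exist_eLpNorm_sub_le ENNReal.ofNat_ne_top one_le_two (half_pos hε)
  have hgm (ρ : Measure E) : AEStronglyMeasurable g ρ := hg_smooth.continuous.aestronglyMeasurable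
  have hg := eLpNorm_two_schwartzMap_le_of_isPSDKernel_charFun_sub hK
    (hg_supp.toSchwartzMap hg_smooth)
  calc eLpNorm f 2 ν = eLpNorm (g + (f - g)) 2 ν := by rw [add_sub_cancel]
    _ ≤ eLpNorm g 2 ν + eLpNorm (f - g) 2 ν :=
        eLpNorm_add_le (hgm ν) (hf.right_of_add_measure.1.sub (hgm ν)) one_le_two
    _ ≤ eLpNorm g 2 μ + eLpNorm (f - g) 2 ν := add_le_add_left hg _
    _ = eLpNorm (f - (f - g)) 2 μ + eLpNorm (f - g) 2 ν := by rw [sub_sub_cancel]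
    _ ≤ eLpNorm f 2 μ + eLpNorm (f - g) 2 μ + eLpNorm (f - g) 2 ν := by
        gcongr
        exact eLpNorm_sub_le hf.left_of_add_measure.1 (hf.left_of_add_measure.1.sub (hgm μ))
          one_le_two
    _ ≤ eLpNorm f 2 μ + .ofReal (ε / 2) + .ofReal (ε / 2) := by
        gcongr
        · exact (eLpNorm_le_add_measure_right _ _ _).trans hfg
        · exact (eLpNorm_le_add_measure_left _ _ _).trans hfg
    _ = eLpNorm f 2 μ + ε := by
        rw [add_assoc, ← ENNReal.ofReal_add (by positivity) (by positivity), add_halves,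
          ENNReal.ofReal_coe_nnreal]

theorem isPSDKernel_charFun_sub_iff :
    IsPSDKernel (fun x y => charFun μ (x - y) - charFun ν (x - y)) ↔ ν ≤ μ := by
  refine ⟨fun hK => Measure.le_iff.2 fun s hs => ?_, fun hle => ?_⟩
  · have hind := eLpNorm_two_le_of_isPSDKernel_charFun_sub hK
      (memLp_indicator_const 2 hs (1 : ℂ) (.inr (measure_ne_top _ s)))
    rw [eLpNorm_indicator_const hs two_ne_zero ENNReal.ofNat_ne_top,
      eLpNorm_indicator_const hs two_ne_zero ENNReal.ofNat_ne_top, enorm_one, one_mul, one_mul,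
      ENNReal.rpow_le_rpow_iff (by norm_num)] at hind
    exact hind
  · convert isPSDKernel_charFun (μ - ν) using 3 with x y
    conv_lhs => rw [← Measure.sub_add_cancel_of_le hle]
    rw [charFun_add_measure, add_sub_cancel_right]

end Domination

section Density

lemma withDensity_le_withDensity_iff {X : Type*} [TopologicalSpace X] [MeasurableSpace X]
    [OpensMeasurableSpace X] {m : Measure X} [SigmaFinite m] [m.IsOpenPosMeasure]
    {f g : X → ENNReal} (hf : Continuous f) (hg : Continuous g) :
    m.withDensity f ≤ m.withDensity g ↔ f ≤ g := by
  refine ⟨fun h => ?_, fun h => withDensity_mono (ae_of_all _ h)⟩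
  have hae : f ≤ᵐ[m] g := ae_le_of_forall_setLIntegral_le_of_sigmaFinite hf.measurable
    fun s hs _ => by simpa only [withDensity_apply _ hs] using h s
  have hopen : IsOpen {x | g x < f x} := isOpen_lt hg hf
  have hempty : {x | g x < f x} = ∅ := (hopen.measure_eq_zero_iff m).1 <| by
    simpa only [EventuallyLE, ae_iff, not_le] using hae
  exact fun x => not_lt.1 fun hx => (Set.eq_empty_iff_forall_notMem.1 hempty x) hx

variable {E : Type*} [NormedAddCommGroup E] [InnerProductSpace ℝ E] [FiniteDimensional ℝ E]
  [MeasurableSpace E] [BorelSpace E] {f : E → ℝ}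

lemma charFun_withDensity_sub_charFun_withDensity_neg (hfc : Continuous f) (hf : Integrable f)
    (t : E) :
    charFun (volume.withDensity fun ξ => .ofReal (f ξ)) t -
      charFun (volume.withDensity fun ξ => .ofReal (-f ξ)) t =
      ∫ ξ, Complex.exp (Complex.I * (inner ℝ t ξ : ℝ)) * f ξ := by
  have hpart {g : E → ℝ} (hg : Integrable g) :
      Integrable (fun ξ => (g ξ).toNNReal • Complex.exp (inner ℝ ξ t * Complex.I)) :=
    hg.real_toNNReal.smul_bdd 1 (f := fun ξ => Complex.exp (inner ℝ ξ t * Complex.I))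
      (by fun_prop) (ae_of_all _ fun _ => (Complex.norm_exp_ofReal_mul_I _).le)
  have hwd {g : E → ℝ} (hg : Continuous g) :
      charFun (volume.withDensity fun ξ => .ofReal (g ξ)) t =
        ∫ ξ, (g ξ).toNNReal • Complex.exp (inner ℝ ξ t * Complex.I) :=
    integral_withDensity_eq_integral_smul hg.measurable.real_toNNReal _
  rw [hwd hfc, hwd (g := fun ξ => -f ξ) hfc.neg,
    ← integral_sub (hpart hf) (hpart (g := fun ξ => -f ξ) hf.neg)]
  congr with ξ
  simp only [NNReal.smul_def, ← sub_smul, Real.coe_toNNReal', max_zero_sub_max_neg_zero_eq_self]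
  rw [real_inner_comm, mul_comm Complex.I, Complex.real_smul, mul_comm]

theorem isPSDKernel_integral_exp_inner_mul_iff (hfc : Continuous f) (hf : Integrable f) :
    IsPSDKernel (fun x y => ∫ ξ, Complex.exp (Complex.I * (inner ℝ (x - y) ξ : ℝ)) * f ξ) ↔
      ∀ ξ, 0 ≤ f ξ := by
  have := isFiniteMeasure_withDensity_ofReal hf.2
  have : IsFiniteMeasure (volume.withDensity fun ξ => .ofReal (-f ξ)) :=
    isFiniteMeasure_withDensity_ofReal hf.neg.2
  simp_rw [← charFun_withDensity_sub_charFun_withDensity_neg hfc hf]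
  have hofReal {g : E → ℝ} (hg : Continuous g) : Continuous fun ξ => ENNReal.ofReal (g ξ) :=
    ENNReal.continuous_ofReal.comp hg
  rw [isPSDKernel_charFun_sub_iff,
    withDensity_le_withDensity_iff (hofReal (g := fun ξ => -f ξ) hfc.neg) (hofReal hfc)]
  refine forall_congr' fun ξ => ?_
  rw [ENNReal.ofReal_le_ofReal_iff', neg_nonpos]
  exact ⟨fun h => h.elim (fun h => by linarith) id, .inr⟩

end Density

section BSpline

variable {d p q : ℕ}

lemma bsplineDensity_eq_prod_sinc (d p : ℕ) (ξ : EuclideanSpace ℝ (Fin d)) :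
    bsplineDensity d p ξ = (2 * Real.pi) ^ (-(d : ℤ)) * ∏ j, Real.sinc (ξ j / 2) ^ p := by
  simp only [bsplineDensity, Real.sinc, div_eq_zero_iff, OfNat.ofNat_ne_zero, or_false]

lemma continuous_bsplineDensity (d p : ℕ) : Continuous (bsplineDensity d p) := by
  have := Real.continuous_sinc
  simp only [funext (bsplineDensity_eq_prod_sinc d p)]
  fun_prop

lemma sinc_sq_le (x : ℝ) : Real.sinc x ^ 2 ≤ 2 * (1 + x ^ 2)⁻¹ := by
  have hsin : Real.sinc x * x = Real.sin x := by
    obtain rfl | hx := eq_or_ne x 0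
    · simp
    · rw [Real.sinc_of_ne_zero hx, div_mul_cancel₀ _ hx]
  rw [← div_eq_mul_inv, le_div_iff₀ (by positivity)]
  calc Real.sinc x ^ 2 * (1 + x ^ 2) = Real.sinc x ^ 2 + Real.sin x ^ 2 := by rw [← hsin]; ring
    _ ≤ 1 + 1 := add_le_add ((sq_le_one_iff_abs_le_one _).2 (Real.abs_sinc_le_one x))
        (Real.sin_sq_le_one x)
    _ = 2 := one_add_one_eq_two

lemma integrable_sinc_half_pow (hp : 2 ≤ p) : Integrable fun x : ℝ => Real.sinc (x / 2) ^ p := by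
  have hcont : Continuous fun x : ℝ => Real.sinc x ^ p := Real.continuous_sinc.pow p
  have hint : Integrable fun x : ℝ => Real.sinc x ^ p := by
    refine (integrable_inv_one_add_sq.const_mul 2).mono' hcont.aestronglyMeasurable
      (ae_of_all _ fun x => ?_)
    rw [norm_pow, Real.norm_eq_abs]
    refine (pow_le_pow_of_le_one (abs_nonneg _) (Real.abs_sinc_le_one _) hp).trans ?_
    rw [sq_abs]
    exact sinc_sq_le x
  exact hint.comp_div two_ne_zero

lemma integrable_bsplineDensity (d : ℕ) (hp : 2 ≤ p) : Integrable (bsplineDensity d p) := by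
  have hprod : Integrable fun ξ : Fin d → ℝ => ∏ j, Real.sinc (ξ j / 2) ^ p :=
    .fintype_prod fun _ => integrable_sinc_half_pow hp
  rw [funext (bsplineDensity_eq_prod_sinc d p)]
  exact ((PiLp.volume_preserving_ofLp (Fin d)).integrable_comp_of_integrable hprod).const_mul _

lemma bsplineDensity_single (i : Fin d) (p : ℕ) (t : ℝ) :
    bsplineDensity d p (EuclideanSpace.single i t) =
      (2 * Real.pi) ^ (-(d : ℤ)) * Real.sinc (t / 2) ^ p := by
  rw [bsplineDensity_eq_prod_sinc, Finset.prod_eq_single i (fun j _ hj => by simp [hj]) (by simp)]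
  simp

lemma bsplineDensity_le_bsplineDensity (hp : Even p) (hpq : p ≤ q)
    (ξ : EuclideanSpace ℝ (Fin d)) : bsplineDensity d q ξ ≤ bsplineDensity d p ξ := by
  simp only [bsplineDensity_eq_prod_sinc]
  gcongr ?_ * ?_
  refine (le_abs_self _).trans ?_
  rw [Finset.abs_prod]
  gcongr with j
  rw [abs_pow, ← hp.pow_abs]
  exact pow_le_pow_of_le_one (abs_nonneg _) (Real.abs_sinc_le_one _) hpq

lemma mul_bsplineK_sub_bsplineK (hp : 2 ≤ p) (hq : 2 ≤ q) (lam : ℝ)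
    (x y : EuclideanSpace ℝ (Fin d)) :
    lam * bsplineK d p x y - bsplineK d q x y =
      ∫ ξ, Complex.exp (Complex.I * (inner ℝ (x - y) ξ : ℝ)) *
        (lam * bsplineDensity d p ξ - bsplineDensity d q ξ : ℝ) := by
  have hint {n : ℕ} (hn : 2 ≤ n) : Integrable fun ξ =>
      Complex.exp (Complex.I * (inner ℝ (x - y) ξ : ℝ)) * bsplineDensity d n ξ := by
    refine (integrable_bsplineDensity d hn).ofReal.bdd_mul (c := 1) (by fun_prop)
      (ae_of_all _ fun ξ => ?_)
    rw [mul_comm, Complex.norm_exp_ofReal_mul_I]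
  rw [bsplineK, bsplineK, ← integral_const_mul, ← integral_sub ((hint hp).const_mul _) (hint hq)]
  congr with ξ
  push_cast
  ring

lemma isPSDKernel_mul_bsplineK_sub_iff (hp : 2 ≤ p) (hq : 2 ≤ q) (lam : ℝ) :
    IsPSDKernel (fun x y => lam * bsplineK d p x y - bsplineK d q x y) ↔
      ∀ ξ, bsplineDensity d q ξ ≤ lam * bsplineDensity d p ξ := by
  simp_rw [mul_bsplineK_sub_bsplineK hp hq, ← sub_nonneg (b := bsplineDensity d q _)]
  exact isPSDKernel_integral_exp_inner_mul_iff
    (((continuous_bsplineDensity d p).const_mul lam).sub (continuous_bsplineDensity d q))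
    (((integrable_bsplineDensity d hp).const_mul lam).sub (integrable_bsplineDensity d hq))

lemma sinc_pow_le_of_bsplineDensity_le {lam : ℝ} (i : Fin d)
    (h : ∀ ξ, bsplineDensity d q ξ ≤ lam * bsplineDensity d p ξ) (t : ℝ) :
    Real.sinc t ^ q ≤ lam * Real.sinc t ^ p := by
  have hi := h (EuclideanSpace.single i (2 * t))
  rw [bsplineDensity_single, bsplineDensity_single, mul_left_comm,
    mul_div_cancel_left₀ t two_ne_zero] at hi
  exact le_of_mul_le_mul_left hi (by positivity)

lemma isPSDKernel_mul_bsplineK_sub_iff_one_le (i : Fin d) (hp2 : 2 ≤ p) (hp : Even p)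
    (hpq : p < q) {lam : ℝ} :
    IsPSDKernel (fun x y => lam * bsplineK d p x y - bsplineK d q x y) ↔ 1 ≤ lam := by
  rw [isPSDKernel_mul_bsplineK_sub_iff hp2 (by lia)]
  refine ⟨fun h => by simpa using sinc_pow_le_of_bsplineDensity_le i h 0, fun h ξ => ?_⟩
  have hnonneg : 0 ≤ bsplineDensity d p ξ := by
    rw [bsplineDensity_eq_prod_sinc]
    exact mul_nonneg (by positivity) (Finset.prod_nonneg fun j _ => hp.pow_nonneg _)
  exact (bsplineDensity_le_bsplineDensity hp hpq.le ξ).trans (le_mul_of_one_le_left hnonneg h)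

/- Both densities vanish at `ξ = 2π e_i`, but `b_q` does so to a higher order than `b_p`. -/
lemma not_isPSDKernel_mul_bsplineK_sub (i : Fin d) (hp : 2 ≤ p) (hpq : p < q) (lam : ℝ) :
    ¬ IsPSDKernel fun x y => lam * bsplineK d q x y - bsplineK d p x y := by
  rw [isPSDKernel_mul_bsplineK_sub_iff (by lia) hp]
  intro h
  have hquot (t : ℝ) (ht : t ∈ Set.Ioo 0 Real.pi) : 1 ≤ lam * Real.sinc t ^ (q - p) := by
    have hpos : 0 < Real.sinc t := by
      rw [Real.sinc_of_ne_zero ht.1.ne']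
      exact div_pos (Real.sin_pos_of_mem_Ioo ht) ht.1
    have hle := sinc_pow_le_of_bsplineDensity_le i h t
    rw [← Nat.sub_add_cancel hpq.le, pow_add, ← mul_assoc] at hle
    exact (le_mul_iff_one_le_left (pow_pos hpos p)).1 hle
  have hlim : Tendsto (fun t => lam * Real.sinc t ^ (q - p)) (𝓝[<] Real.pi) (𝓝 0) := by
    have hcont : Continuous fun t => lam * Real.sinc t ^ (q - p) := by
      have := Real.continuous_sinc
      fun_prop
    have hpi : Real.sinc Real.pi = 0 := by simp [Real.sinc_of_ne_zero Real.pi_ne_zero]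
    simpa [hpi, Nat.sub_ne_zero_of_lt hpq] using
      (hcont.tendsto Real.pi).mono_left nhdsWithin_le_nhds
  exact absurd (ge_of_tendsto hlim (eventually_of_mem (Ioo_mem_nhdsLT Real.pi_pos) hquot))
    (by norm_num)

end BSpline

section Axes

lemma measurable_euclideanSpace_single {ι : Type*} [Finite ι] [DecidableEq ι] (j : ι) :
    Measurable (EuclideanSpace.single j : ℝ → EuclideanSpace ℝ ι) :=
  ((PiLp.continuous_toLp 2 _).comp (continuous_single j)).measurable

variable {ι : Type*} [Fintype ι] [DecidableEq ι] {μ ν : Measure ℝ}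

/-- The measure on `ℝ^ι` carrying one copy of `μ` on each coordinate axis. It is the spectral
measure of a kernel that is a sum of copies of one kernel, one copy for each coordinate. -/
noncomputable def axisMeasure (ι : Type*) [Fintype ι] [DecidableEq ι] (μ : Measure ℝ) :
    Measure (EuclideanSpace ℝ ι) :=
  ∑ j, μ.map (EuclideanSpace.single j)

instance [IsFiniteMeasure μ] : IsFiniteMeasure (axisMeasure ι μ) := by
  unfold axisMeasure
  infer_instance

lemma charFun_axisMeasure [IsFiniteMeasure μ] (x : EuclideanSpace ℝ ι) :
    charFun (axisMeasure ι μ) x = ∑ j, charFun μ (x j) := by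
  rw [charFun_apply, axisMeasure,
    integral_finsetSum_measure fun j _ => integrable_exp_inner_mul _ x]
  refine Finset.sum_congr rfl fun j _ => ?_
  rw [integral_map (measurable_euclideanSpace_single j).aemeasurable (by fun_prop), charFun_apply]
  simp [EuclideanSpace.inner_single_left, mul_comm]

lemma charFun_axisMeasure_smul [IsFiniteMeasure μ] (c : NNReal)
    (x : EuclideanSpace ℝ ι) :
    charFun (axisMeasure ι (c • μ)) x = c * charFun (axisMeasure ι μ) x := by
  rw [charFun_axisMeasure, charFun_axisMeasure, Finset.mul_sum]
  simp only [charFun_apply, integral_smul_nnreal_measure, NNReal.smul_def, Complex.real_smul]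

lemma axisMeasure_preimage_eval (i : ι) {s : Set ℝ} (hs : MeasurableSet s) (h0 : 0 ∉ s) :
    axisMeasure ι μ ((fun x => x i) ⁻¹' s) = μ s := by
  have hmeas : MeasurableSet ((fun x : EuclideanSpace ℝ ι => x i) ⁻¹' s) :=
    hs.preimage (by fun_prop)
  rw [axisMeasure, Measure.finsetSum_apply, Finset.sum_eq_single i]
  · rw [Measure.map_apply (measurable_euclideanSpace_single i) hmeas]
    congr 1 with t
    simp
  · intro j _ hj
    rw [Measure.map_apply (measurable_euclideanSpace_single j) hmeas]
    convert measure_empty (μ := μ)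
    ext t
    simp [hj.symm, h0]
  · simp

lemma axisMeasure_le_axisMeasure_iff (hν : ν {0} = 0) (i : ι) :
    axisMeasure ι ν ≤ axisMeasure ι μ ↔ ν ≤ μ := by
  refine ⟨fun h => Measure.le_iff.2 fun s hs => ?_, fun h =>
    Finset.sum_le_sum fun j _ => Measure.map_mono h (measurable_euclideanSpace_single j)⟩
  have hs0 : MeasurableSet (s \ {0}) := hs.diff (measurableSet_singleton 0)
  calc ν s = ν (s \ {0}) := (measure_sdiff_null hν).symm
    _ = axisMeasure ι ν ((fun x => x i) ⁻¹' (s \ {0})) :=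
        (axisMeasure_preimage_eval i hs0 (by simp)).symm
    _ ≤ axisMeasure ι μ ((fun x => x i) ⁻¹' (s \ {0})) := h _
    _ = μ (s \ {0}) := axisMeasure_preimage_eval i hs0 (by simp)
    _ ≤ μ s := measure_mono Set.sdiff_subset

end Axes

section Anova

lemma continuous_gaussianPDF (m : ℝ) (v : NNReal) : Continuous (gaussianPDF m v) := by
  have : Continuous (gaussianPDFReal m v) := by
    unfold gaussianPDFReal
    fun_prop
  exact ENNReal.continuous_ofReal.comp this

lemma gaussianReal_le_smul_gaussianReal_iff (m n : ℝ) {v w : NNReal} (hv : v ≠ 0) (hw : w ≠ 0)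
    (c : NNReal) :
    gaussianReal m v ≤ c • gaussianReal n w ↔
      ∀ t, gaussianPDFReal m v t ≤ c * gaussianPDFReal n w t := by
  have hcont : Continuous ((c : ENNReal) • gaussianPDF n w) :=
    (ENNReal.continuous_const_mul ENNReal.coe_ne_top).comp (continuous_gaussianPDF n w)
  rw [gaussianReal_of_var_ne_zero _ hv, gaussianReal_of_var_ne_zero _ hw, ENNReal.smul_def,
    ← withDensity_smul _ (measurable_gaussianPDF _ _),
    withDensity_le_withDensity_iff (continuous_gaussianPDF m v) hcont]
  refine forall_congr' fun t => ?_
  rw [Pi.smul_apply, smul_eq_mul, gaussianPDF, gaussianPDF, ← ENNReal.ofReal_coe_nnreal,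
    ← ENNReal.ofReal_mul c.coe_nonneg, ENNReal.ofReal_le_ofReal_iff
      (mul_nonneg c.coe_nonneg (gaussianPDFReal_nonneg _ _ _))]

variable {d : ℕ} {σ τ : ℝ}

lemma anovaK_eq_charFun (hτ : 0 < τ) (x y : EuclideanSpace ℝ (Fin d)) :
    anovaK d τ x y = charFun (axisMeasure (Fin d) (gaussianReal 0 (2 / τ).toNNReal)) (x - y) := by
  rw [charFun_axisMeasure, anovaK, Complex.ofReal_sum]
  refine Finset.sum_congr rfl fun j _ => ?_
  rw [charFun_gaussianReal, Real.coe_toNNReal _ (by positivity), sq_abs, PiLp.sub_apply]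
  push_cast
  congr 1
  ring

lemma gaussianPDFReal_zero_two_div (hτ : 0 < τ) (t : ℝ) :
    gaussianPDFReal 0 (2 / τ).toNNReal t =
      √τ * Real.exp (-(τ / 4 * t ^ 2)) / √(4 * Real.pi) := by
  rw [gaussianPDFReal, Real.coe_toNNReal _ (by positivity), mul_div_right_comm,
    ← Real.sqrt_div hτ.le, ← Real.sqrt_inv]
  congr 2 <;> field_simp <;> ring

lemma isPSDKernel_mul_anovaK_sub_iff (i : Fin d) (hσ : 0 < σ) (hτ : 0 < τ) {lam : ℝ}
    (hlam : 0 ≤ lam) :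
    IsPSDKernel (fun x y : EuclideanSpace ℝ (Fin d) =>
        lam * anovaK d σ x y - anovaK d τ x y) ↔
      ∀ t, √τ * Real.exp (-(τ / 4 * t ^ 2)) ≤ lam * (√σ * Real.exp (-(σ / 4 * t ^ 2))) := by
  lift lam to NNReal using hlam
  have hvar {ρ : ℝ} (hρ : 0 < ρ) : (2 / ρ).toNNReal ≠ 0 :=
    (Real.toNNReal_pos.2 (by positivity)).ne'
  have := nullSingletonClass_gaussianReal (μ := 0) (hvar hτ)
  simp_rw [anovaK_eq_charFun hσ, anovaK_eq_charFun hτ, ← charFun_axisMeasure_smul]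
  rw [isPSDKernel_charFun_sub_iff, axisMeasure_le_axisMeasure_iff (measure_singleton 0) i,
    gaussianReal_le_smul_gaussianReal_iff 0 0 (hvar hτ) (hvar hσ)]
  refine forall_congr' fun t => ?_
  rw [gaussianPDFReal_zero_two_div hσ, gaussianPDFReal_zero_two_div hτ, ← mul_div_assoc]
  exact div_le_div_iff_of_pos_right (by positivity)

lemma isPSDKernel_mul_anovaK_sub_iff_sqrt_le (i : Fin d) (hσ : 0 < σ) (hστ : σ ≤ τ) {lam : ℝ}
    (hlam : 0 ≤ lam) :
    IsPSDKernel (fun x y : EuclideanSpace ℝ (Fin d) =>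
        lam * anovaK d σ x y - anovaK d τ x y) ↔ √(τ / σ) ≤ lam := by
  rw [isPSDKernel_mul_anovaK_sub_iff i hσ (hσ.trans_le hστ) hlam, Real.sqrt_div' _ hσ.le,
    div_le_iff₀ (Real.sqrt_pos.2 hσ)]
  refine ⟨fun h => by simpa using h 0, fun h t => ?_⟩
  rw [← mul_assoc]
  gcongr

lemma not_isPSDKernel_mul_anovaK_sub (i : Fin d) (hσ : 0 < σ) (hστ : σ < τ) {lam : ℝ}
    (hlam : 0 ≤ lam) :
    ¬ IsPSDKernel fun x y : EuclideanSpace ℝ (Fin d) =>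
        lam * anovaK d τ x y - anovaK d σ x y := by
  rw [isPSDKernel_mul_anovaK_sub_iff i (hσ.trans hστ) hσ hlam]
  intro h
  have hbound (t : ℝ) : √σ ≤ lam * √τ * Real.exp (-((τ - σ) / 4 * t ^ 2)) := by
    refine le_of_mul_le_mul_right ((h t).trans_eq ?_) (Real.exp_pos (-(σ / 4 * t ^ 2)))
    rw [mul_assoc (lam * √τ), ← Real.exp_add]
    ring_nf
  have hlim : Tendsto (fun t : ℝ => lam * √τ * Real.exp (-((τ - σ) / 4 * t ^ 2))) atTop (𝓝 0) := by
    have hsq : Tendsto (fun t : ℝ => (τ - σ) / 4 * t ^ 2) atTop atTop :=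
      (tendsto_pow_atTop two_ne_zero).const_mul_atTop (by linarith)
    simpa using (Real.tendsto_exp_neg_atTop_nhds_zero.comp hsq).const_mul (lam * √τ)
  exact (Real.sqrt_pos.2 hσ).not_ge (ge_of_tendsto' hlim hbound)

end Anova

theorem bspline_anova_inclusion_general (d : ℕ) (hd : 0 < d)
    (p q : ℕ) (hp : Even p) (hp0 : 0 < p) (hpq : p < q)
    (τ₁ τ₂ : ℝ) (hτ₁ : 0 < τ₁) (hτ₁₂ : τ₁ < τ₂) :
    (IsPSDKernel (fun x y : EuclideanSpace ℝ (Fin d) =>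
        bsplineK d p x y - bsplineK d q x y) ∧
      IsLeast {lam : ℝ | 0 ≤ lam ∧
          IsPSDKernel (fun x y : EuclideanSpace ℝ (Fin d) =>
            (lam : ℂ) * bsplineK d p x y - bsplineK d q x y)} 1 ∧
      ¬ ∃ lam : ℝ, 0 ≤ lam ∧
        IsPSDKernel (fun x y : EuclideanSpace ℝ (Fin d) =>
          (lam : ℂ) * bsplineK d q x y - bsplineK d p x y)) ∧
    (IsPSDKernel (fun x y : EuclideanSpace ℝ (Fin d) =>
        ((Real.sqrt (τ₂ / τ₁) : ℝ) : ℂ) * anovaK d τ₁ x y - anovaK d τ₂ x y) ∧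
      IsLeast {lam : ℝ | 0 ≤ lam ∧
          IsPSDKernel (fun x y : EuclideanSpace ℝ (Fin d) =>
            (lam : ℂ) * anovaK d τ₁ x y - anovaK d τ₂ x y)}
        (Real.sqrt (τ₂ / τ₁)) ∧
      ¬ ∃ lam : ℝ, 0 ≤ lam ∧
        IsPSDKernel (fun x y : EuclideanSpace ℝ (Fin d) =>
          (lam : ℂ) * anovaK d τ₂ x y - anovaK d τ₁ x y)) := by
  have hp2 : 2 ≤ p := by
    obtain ⟨k, rfl⟩ := hp
    lia
  let i : Fin d := ⟨0, hd⟩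
  have bspline_iff {lam : ℝ} := isPSDKernel_mul_bsplineK_sub_iff_one_le i hp2 hp hpq (lam := lam)
  have anova_iff {lam : ℝ} := isPSDKernel_mul_anovaK_sub_iff_sqrt_le i hτ₁ hτ₁₂.le (lam := lam)
  have hsqrt : 0 ≤ √(τ₂ / τ₁) := Real.sqrt_nonneg _
  have anova_psd := (anova_iff hsqrt).2 le_rfl
  refine ⟨⟨?_, ⟨⟨zero_le_one, bspline_iff.2 le_rfl⟩, fun _ h => bspline_iff.1 h.2⟩, ?_⟩,
    anova_psd, ⟨⟨hsqrt, anova_psd⟩, fun _ h => (anova_iff h.1).1 h.2⟩, ?_⟩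
  · simpa using bspline_iff.2 le_rfl
  · exact fun ⟨lam, _, h⟩ => not_isPSDKernel_mul_bsplineK_sub i hp2 hpq lam h
  · exact fun ⟨_, hlam, h⟩ => not_isPSDKernel_mul_anovaK_sub i hτ₁ hτ₁₂ hlam h

/-- (a) For even orders `p < q` (with `p` positive): `B_p − B_q` is positive
semidefinite, `1` is the least constant `λ ≥ 0` making `λB_p − B_q` positive
semidefinite, and no `λ ≥ 0` makes `λB_q − B_p` positive semidefinite.
(b) For `0 < τ₁ < τ₂`: `√(τ₂/τ₁) A_{τ₁} − A_{τ₂}` is positive semidefinite with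
`√(τ₂/τ₁)` the least such constant, and no `λ ≥ 0` makes `λA_{τ₂} − A_{τ₁}`
positive semidefinite. -/
theorem bspline_anova_inclusion (d : ℕ) (hd : 0 < d)
    (p q : ℕ) (hp : Even p) (hq : Even q) (hp0 : 0 < p) (hpq : p < q)
    (τ₁ τ₂ : ℝ) (hτ₁ : 0 < τ₁) (hτ₁₂ : τ₁ < τ₂) :
    (IsPSDKernel (fun x y : EuclideanSpace ℝ (Fin d) =>
        bsplineK d p x y - bsplineK d q x y) ∧
      IsLeast {lam : ℝ | 0 ≤ lam ∧
          IsPSDKernel (fun x y : EuclideanSpace ℝ (Fin d) =>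
            (lam : ℂ) * bsplineK d p x y - bsplineK d q x y)} 1 ∧
      ¬ ∃ lam : ℝ, 0 ≤ lam ∧
        IsPSDKernel (fun x y : EuclideanSpace ℝ (Fin d) =>
          (lam : ℂ) * bsplineK d q x y - bsplineK d p x y)) ∧
    (IsPSDKernel (fun x y : EuclideanSpace ℝ (Fin d) =>
        ((Real.sqrt (τ₂ / τ₁) : ℝ) : ℂ) * anovaK d τ₁ x y - anovaK d τ₂ x y) ∧
      IsLeast {lam : ℝ | 0 ≤ lam ∧
          IsPSDKernel (fun x y : EuclideanSpace ℝ (Fin d) =>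
            (lam : ℂ) * anovaK d τ₁ x y - anovaK d τ₂ x y)}
        (Real.sqrt (τ₂ / τ₁)) ∧
      ¬ ∃ lam : ℝ, 0 ≤ lam ∧
        IsPSDKernel (fun x y : EuclideanSpace ℝ (Fin d) =>
          (lam : ℂ) * anovaK d τ₂ x y - anovaK d τ₁ x y)) :=
  bspline_anova_inclusion_general d hd p q hp hp0 hpq τ₁ τ₂ hτ₁ hτ₁₂
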